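/- arXiv:0809.4862 — 2 statements merged into one kernel-verified Lean document; each statement's English description precedes it below -/
import Mathlib

section
/- Let ℓ ≥ 0 be an integer, let U ⊆ ℝ^n be an open ball, and let Φ : U → ℝ^m be a C^ℓ function such that: (i) there is C > 0 with |(u, Φ(u)) − (u', Φ(u'))| ≤ C|u − u'| for all u, u' ∈ U; (ii) the jet map u ↦ j_u^ℓ Φ is continuous and bounded on U; and (iii) there exists ρ > 0 such that for every pair z = (u, u') ∈ U × U there are maps H_z^ℓ : B_{J^ℓ(ℝ^n,ℝ^m)}(j_u^ℓ Φ, ρ) → J^ℓ(ℝ^n, ℝ^m) and H_z^0 defined on the corresponding ball in J^0(ℝ^n, ℝ^m) = ℝ^n × ℝ^m, with π_{ℓ,0} ∘ H_z^ℓ = H_z^0 ∘ π_{ℓ,0}, such that, writing H_z^0(v, w) = (h_z(v,w), g_z(v,w)): h_z(u, Φ(u)) = u'; H_z^ℓ(j_v^ℓ Φ) = j^ℓ_{h_z(v, Φ(v))} Φ for every v with j_v^ℓ Φ ∈ B_{J^ℓ(ℝ^n,ℝ^m)}(j_u^ℓ Φ, ρ); and the Lipschitz constant of Id − H_z^ℓ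 on B_{J^ℓ(ℝ^n,ℝ^m)}(j_u^ℓ Φ, ρ) is at most 1/2. Then the map u ↦ j_u^ℓ Φ is locally Lipschitz on U. -/
open Metric Set

noncomputable section

abbrev Euc (d : ℕ) := EuclideanSpace ℝ (Fin d)

/-- The fiber of the bundle of `ℓ`-jets of maps `ℝ^a → ℝ^b`. -/
abbrev JetFiber (a b ℓ : ℕ) :=
  ∀ i : Fin (ℓ + 1), ContinuousMultilinearMap ℝ (fun _ : Fin (i : ℕ) => Euc a) (Euc b)

/-- The space of `ℓ`-jets of maps `ℝ^a → ℝ^b`, identified with `ℝ^a × P^ℓ(a,b)`. -/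
abbrev Jet (a b ℓ : ℕ) := Euc a × JetFiber a b ℓ

/-- The `ℓ`-jet of `f` at `x`. -/
def jetAt (a b ℓ : ℕ) (f : Euc a → Euc b) (x : Euc a) : Jet a b ℓ :=
  (x, fun i => iteratedFDeriv ℝ i f x)

/-- The projection `π_{ℓ,ℓ'}` from `ℓ`-jets to `ℓ'`-jets, for `ℓ' ≤ ℓ`. -/
def jetProj {a b ℓ ℓ' : ℕ} (h : ℓ' ≤ ℓ) (j : Jet a b ℓ) : Jet a b ℓ' :=
  (j.1, fun i => j.2 ⟨(i : ℕ), by omega⟩)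

/-- The `0`-jet determined by a base point `v` and a value `w`. -/
def jet0mk (a b : ℕ) (v : Euc a) (w : Euc b) : Jet a b 0 :=
  (v, fun i => iteratedFDeriv ℝ i (fun _ => w) v)

/-!
Let `F` be the jet map of `Φ`.  For `z = (u, u')`, the map `H_z` carries the increment `F v - F u`
to one based at `u'`, with relative error at most `1 / 2`.  The base points of the new increment are
`O(‖v - u‖)` apart, because `H_z` covers a map of `0`-jets and the graph of `Φ` is Lipschitz.
Chaining `k ≈ a / ‖v - u‖` such copies of one increment stays in a ball of radius `O(a)`, while `F`
changes by at least `k / 2 * ‖F v - F u‖`.  As `F` is bounded on that ball, this forces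
`‖F v - F u‖ = O(‖v - u‖)`.
-/

open scoped NNReal Topology

section Transport

variable {X Y : Type*} [PseudoMetricSpace X]

theorem exists_lipschitzOnWith_ball_inter [PseudoMetricSpace Y] {f : X → Y} {s : Set X}
    (hf : LocallyLipschitzOn s f) {x : X} (hx : x ∈ s) :
    ∃ ε > 0, ∃ K, LipschitzOnWith K f (ball x ε ∩ s) := by
  obtain ⟨K, t, ht, hK⟩ := hf hx
  obtain ⟨ε, hε, hεt⟩ := mem_nhdsWithin_iff.1 ht
  exact ⟨ε, hε, K, hK.mono hεt⟩

/-- `F` has transportable increments on `s` when each increment `F v - F u` can be reproduced at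
every other base point `u'` of `s`, with relative error `κ`, by a displacement of `u'` which is at
most `L` times that from `u` to `v`.  The displaced point `v'` is allowed to leave `s`. -/
def HasTransportableIncrementsOn [SeminormedAddCommGroup Y] (F : X → Y) (s : Set X) (L κ : ℝ≥0) :
    Prop :=
  ∀ u ∈ s, ∀ v ∈ s, ∀ u' ∈ s, ∃ v', dist v' u' ≤ L * dist v u ∧
    ‖(F v' - F u') - (F v - F u)‖ ≤ κ * ‖F v - F u‖

theorem exists_dist_le_and_norm_sub_nsmul_le [SeminormedAddCommGroup Y] {F : X → Y} {u : X} {d : Y}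
    {a δ ε : ℝ} (hδ : 0 ≤ δ)
    (hstep : ∀ w ∈ closedBall u a, ∃ w', dist w' w ≤ δ ∧ ‖(F w' - F w) - d‖ ≤ ε) (k : ℕ)
    (hk : k * δ ≤ a) : ∃ w, dist w u ≤ k * δ ∧ ‖(F w - F u) - k • d‖ ≤ k * ε := by
  induction k with
  | zero => exact ⟨u, by simp, by simp⟩
  | succ k ih =>
    push_cast at hk ⊢
    obtain ⟨w, hwu, hFw⟩ := ih (by linarith)
    obtain ⟨w', hw'w, hFw'⟩ := hstep w (mem_closedBall.2 (by linarith))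
    refine ⟨w', by linarith [dist_triangle w' w u], ?_⟩
    calc ‖(F w' - F u) - (k + 1) • d‖
        = ‖((F w' - F w) - d) + ((F w - F u) - k • d)‖ := by rw [succ_nsmul]; congr 1; abel
      _ ≤ ‖(F w' - F w) - d‖ + ‖(F w - F u) - k • d‖ := norm_add_le _ _
      _ ≤ (k + 1) * ε := by linarith

theorem mul_le_two_mul_mul_of_forall_nat_mul_le {a x B δ : ℝ} (hx : 0 ≤ x) (hxB : x ≤ B)
    (ha : 0 ≤ a) (hδ : 0 ≤ δ) (h : ∀ k : ℕ, k * δ ≤ a → k * x ≤ B) : a * x ≤ 2 * B * δ := by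
  rcases hδ.eq_or_lt with rfl | hδ
  · have hx_nonpos : x ≤ 0 := by
      by_contra! hx_pos
      obtain ⟨k, hk⟩ := exists_nat_gt (B / x)
      exact (h k (by simpa using ha)).not_gt ((div_lt_iff₀ hx_pos).1 hk)
    simp [le_antisymm hx_nonpos hx]
  · set k := ⌊a / δ⌋₊
    have hk : k * x ≤ B := h k ((le_div_iff₀ hδ).1 (Nat.floor_le (by positivity)))
    have hka : a ≤ (k + 1) * δ := ((div_lt_iff₀ hδ).1 (Nat.lt_floor_add_one _)).le
    calc a * x ≤ (k + 1) * δ * x := by gcongr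
      _ = (k * x + x) * δ := by ring
      _ ≤ 2 * B * δ := by gcongr; linarith

variable [NormedAddCommGroup Y] [NormedSpace ℝ Y] {F : X → Y}

theorem mul_norm_le_of_forall_exists_transport {u : X} {d : Y} {a δ B : ℝ} {κ : ℝ≥0} (hκ : κ < 1)
    (ha : 0 ≤ a) (hδ : 0 ≤ δ) (hd : ‖d‖ ≤ B)
    (hB : ∀ w ∈ closedBall u a, dist (F w) (F u) ≤ B)
    (hstep : ∀ w ∈ closedBall u a, ∃ w', dist w' w ≤ δ ∧ ‖(F w' - F w) - d‖ ≤ κ * ‖d‖) :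
    a * ((1 - κ) * ‖d‖) ≤ 2 * B * δ := by
  have hκ' : 0 < 1 - (κ : ℝ) := sub_pos.2 (mod_cast hκ)
  have hκd : (0 : ℝ) ≤ κ * ‖d‖ := by positivity
  refine mul_le_two_mul_mul_of_forall_nat_mul_le (by positivity) (by linarith) ha hδ fun k hk ↦ ?_
  obtain ⟨w, hwu, hFw⟩ := exists_dist_le_and_norm_sub_nsmul_le hδ hstep k hk
  have hFwu : ‖F w - F u‖ ≤ B := dist_eq_norm (F w) (F u) ▸ hB w (hwu.trans hk)
  have hkd : k * ‖d‖ ≤ ‖F w - F u‖ + ‖(F w - F u) - k • d‖ := by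
    rw [← nsmul_eq_mul, ← RCLike.norm_nsmul ℝ]
    exact norm_le_insert _ _
  linarith

theorem HasTransportableIncrementsOn.exists_lipschitzOnWith {s : Set X} {p : X} {L κ : ℝ≥0}
    (hF : HasTransportableIncrementsOn F s L κ) (hκ : κ < 1) (hs : s ∈ 𝓝 p)
    (hbdd : Bornology.IsBounded (F '' s)) : ∃ K, ∃ t ∈ 𝓝 p, LipschitzOnWith K F t := by
  obtain ⟨b, hb, hbs⟩ := Metric.mem_nhds_iff.1 hs
  obtain ⟨a, ha, rfl⟩ : ∃ a, 0 < a ∧ 2 * a = b := ⟨b / 2, by positivity, by ring⟩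
  obtain ⟨B, hB⟩ := isBounded_iff.1 hbdd
  have hκ' : 0 < 1 - (κ : ℝ) := sub_pos.2 (mod_cast hκ)
  have hsub : ∀ u ∈ ball p a, closedBall u a ⊆ s := fun u hu w hw ↦ hbs <| by
    rw [mem_ball, mem_closedBall] at *
    linarith [dist_triangle w u p]
  have hmem : ∀ u ∈ ball p a, u ∈ s := fun u hu ↦ hsub u hu (mem_closedBall_self ha.le)
  have hdist : ∀ w ∈ s, ∀ u ∈ s, dist (F w) (F u) ≤ B := fun w hw u hu ↦
    hB (mem_image_of_mem F hw) (mem_image_of_mem F hu)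
  refine ⟨(2 * B * L / (a * (1 - κ))).toNNReal, ball p a, ball_mem_nhds p ha,
    .of_dist_le' fun v hv u hu ↦ ?_⟩
  have hvu := mul_norm_le_of_forall_exists_transport (F := F) (u := u) (d := F v - F u) hκ ha.le
    (by positivity) (dist_eq_norm (F v) (F u) ▸ hdist v (hmem v hv) u (hmem u hu))
    (fun w hw ↦ hdist w (hsub u hu hw) u (hmem u hu))
    fun w hw ↦ hF u (hmem u hu) v (hmem v hv) w (hsub u hu hw)
  rw [div_mul_eq_mul_div, le_div_iff₀ (by positivity), dist_eq_norm]
  linarith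

end Transport

section NearIdentity

variable {Y : Type*} [SeminormedAddCommGroup Y] {H : Y → Y} {s : Set Y} {κ : ℝ≥0}

theorem lipschitzOnWith_of_id_sub (hH : LipschitzOnWith κ (fun x ↦ x - H x) s) :
    LipschitzOnWith (1 + κ) H s := by
  simpa using LipschitzWith.id.lipschitzOnWith.sub hH

theorem norm_map_sub_map_sub_sub_le_of_lipschitzOnWith_id_sub
    (hH : LipschitzOnWith κ (fun x ↦ x - H x) s) {x y : Y} (hx : x ∈ s) (hy : y ∈ s) :
    ‖(H y - H x) - (y - x)‖ ≤ κ * ‖y - x‖ := by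
  rw [← norm_neg, show -((H y - H x) - (y - x)) = (y - H y) - (x - H x) by abel]
  exact hH.norm_sub_le hy hx

end NearIdentity

section Jet

variable {a b ℓ ℓ' : ℕ} (h : ℓ' ≤ ℓ)

theorem jetProj_sub (x y : Jet a b ℓ) : jetProj h (x - y) = jetProj h x - jetProj h y :=
  rfl

theorem jetProj_jetAt (f : Euc a → Euc b) (x : Euc a) :
    jetProj h (jetAt a b ℓ f x) = jetAt a b ℓ' f x :=
  rfl

theorem lipschitzWith_jetProj : LipschitzWith 1 (jetProj h : Jet a b ℓ → Jet a b ℓ') :=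
  .of_dist_le_mul fun x y ↦ by
    rw [NNReal.coe_one, one_mul]
    exact max_le_max le_rfl ((dist_pi_le_iff dist_nonneg).2 fun i ↦
      dist_le_pi_dist x.2 y.2 ⟨i, by omega⟩)

/-- The `ℓ`-jet obtained from `j` by replacing its part of order at most `ℓ'` by the `ℓ'`-jet `q`.
For fixed `j` it is a `1`-Lipschitz section of the projection `π_{ℓ,ℓ'}`. -/
def jetLift (j : Jet a b ℓ) (q : Jet a b ℓ') : Jet a b ℓ :=
  (q.1, fun i ↦ if hi : (i : ℕ) < ℓ' + 1 then q.2 ⟨i, hi⟩ else j.2 i)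

theorem jetProj_jetLift (j : Jet a b ℓ) (q : Jet a b ℓ') : jetProj h (jetLift j q) = q :=
  Prod.ext rfl (funext fun i ↦ dif_pos i.2)

theorem jetLift_jetProj (j : Jet a b ℓ) : jetLift j (jetProj h j) = j :=
  Prod.ext rfl (funext fun _ ↦ dite_eq_right_iff.2 fun _ ↦ rfl)

theorem lipschitzWith_jetLift (j : Jet a b ℓ) :
    LipschitzWith 1 (jetLift j : Jet a b ℓ' → Jet a b ℓ) :=
  .of_dist_le_mul fun q q' ↦ by
    rw [NNReal.coe_one, one_mul]
    refine max_le_max le_rfl ((dist_pi_le_iff dist_nonneg).2 fun i ↦ ?_)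
    by_cases hi : (i : ℕ) < ℓ' + 1
    · simpa only [jetLift, dif_pos hi] using dist_le_pi_dist q.2 q'.2 ⟨i, hi⟩
    · simp only [jetLift, dif_neg hi, dist_self, dist_nonneg]

theorem mapsTo_jetLift_ball (j : Jet a b ℓ) (ρ : ℝ) :
    MapsTo (jetLift j) (ball (jetProj h j) ρ) (ball j ρ) := by
  simpa only [jetLift_jetProj, NNReal.coe_one, one_mul] using
    (lipschitzWith_jetLift j).mapsTo_ball one_ne_zero (jetProj h j) ρ

theorem lipschitzOnWith_id_sub_of_jetProj_semiconj {H : Jet a b ℓ → Jet a b ℓ}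
    {G : Jet a b ℓ' → Jet a b ℓ'} {j : Jet a b ℓ} {ρ : ℝ} {κ : ℝ≥0}
    (hHG : ∀ x ∈ ball j ρ, jetProj h (H x) = G (jetProj h x))
    (hH : LipschitzOnWith κ (fun x ↦ x - H x) (ball j ρ)) :
    LipschitzOnWith κ (fun q ↦ q - G q) (ball (jetProj h j) ρ) := by
  have hlift := mapsTo_jetLift_ball h j ρ
  have hG_eq : EqOn (jetProj h ∘ (fun x ↦ x - H x) ∘ jetLift j) (fun q ↦ q - G q)
      (ball (jetProj h j) ρ) := fun q hq ↦ by
    simp only [Function.comp_apply, jetProj_sub, hHG _ (hlift hq), jetProj_jetLift]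
  have hcomp := (lipschitzWith_jetProj h).comp_lipschitzOnWith
    (hH.comp (lipschitzWith_jetLift j).lipschitzOnWith hlift)
  rw [one_mul, mul_one] at hcomp
  exact fun q hq q' hq' ↦ by simpa only [hG_eq hq, hG_eq hq'] using hcomp hq hq'

theorem jetAt_zero (f : Euc a → Euc b) (x : Euc a) : jetAt a b 0 f x = jet0mk a b x (f x) := by
  refine Prod.ext rfl (funext fun i ↦ ?_)
  obtain rfl := Fin.fin_one_eq_zero i
  rfl

theorem dist_jet0mk (v v' : Euc a) (w w' : Euc b) :
    dist (jet0mk a b v w) (jet0mk a b v' w') = dist (v, w) (v', w') := by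
  have hvalue : dist ((jet0mk a b v w).2 0) ((jet0mk a b v' w').2 0) = dist w w' :=
    (continuousMultilinearCurryFin0 ℝ (Euc a) (Euc b)).symm.dist_map w w'
  refine congrArg (max (dist v v')) (le_antisymm ?_ ?_)
  · refine (dist_pi_le_iff dist_nonneg).2 fun i ↦ ?_
    obtain rfl := Fin.fin_one_eq_zero i
    exact hvalue.le
  · exact hvalue.ge.trans (dist_le_pi_dist (jet0mk a b v w).2 (jet0mk a b v' w').2 0)

theorem lipschitzOnWith_jetProj_jetAt {f : Euc a → Euc b} {s : Set (Euc a)} {C : ℝ≥0}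
    (hf : LipschitzOnWith C (fun u ↦ (u, f u)) s) :
    LipschitzOnWith C (fun u ↦ jetProj (Nat.zero_le ℓ) (jetAt a b ℓ f u)) s :=
  .of_dist_le_mul fun u hu v hv ↦ by
    simpa only [jetProj_jetAt, jetAt_zero, dist_jet0mk] using hf.dist_le_mul u hu v hv

end Jet

section Holonomy

variable {n m ℓ ℓ' : ℕ} {h : ℓ' ≤ ℓ} {F : Euc n → Jet n m ℓ} {U : Set (Euc n)} {ρ : ℝ} {κ : ℝ≥0}
  {u u' : Euc n} {H : Jet n m ℓ → Jet n m ℓ} {G : Jet n m ℓ' → Jet n m ℓ'}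

/-- The pair `(H, G)` is a holonomy of `F` from `u` to `u'`: for `F u = j_u^ℓ Φ`, `ℓ' = 0` and
`κ = 1 / 2` it is the paper's `(H_z^ℓ, H_z^0)` with `z = (u, u')`, and the first component of `G` is
`h_z`.  Both maps are total, but `H` is constrained only on the `ρ`-ball about `F u`. -/
structure IsJetHolonomy (h : ℓ' ≤ ℓ) (F : Euc n → Jet n m ℓ) (U : Set (Euc n)) (ρ : ℝ) (κ : ℝ≥0)
    (u u' : Euc n) (H : Jet n m ℓ → Jet n m ℓ) (G : Jet n m ℓ' → Jet n m ℓ') : Prop where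
  jetProj_map : ∀ x ∈ ball (F u) ρ, jetProj h (H x) = G (jetProj h x)
  fst_map_self : (G (jetProj h (F u))).1 = u'
  map_eq : ∀ v ∈ U, F v ∈ ball (F u) ρ → H (F v) = F (G (jetProj h (F v))).1
  lipschitzOnWith_id_sub : LipschitzOnWith κ (fun x ↦ x - H x) (ball (F u) ρ)

theorem isJetHolonomy_jetAt_iff {Φ : Euc n → Euc m} {G : Jet n m 0 → Jet n m 0} :
    IsJetHolonomy (Nat.zero_le ℓ) (jetAt n m ℓ Φ) U ρ κ u u' H G ↔
      (∀ x ∈ ball (jetAt n m ℓ Φ u) ρ,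
        jetProj (Nat.zero_le ℓ) (H x) = G (jetProj (Nat.zero_le ℓ) x)) ∧
      (G (jet0mk n m u (Φ u))).1 = u' ∧
      (∀ v ∈ U, jetAt n m ℓ Φ v ∈ ball (jetAt n m ℓ Φ u) ρ →
        H (jetAt n m ℓ Φ v) = jetAt n m ℓ Φ (G (jet0mk n m v (Φ v))).1) ∧
      LipschitzOnWith κ (fun x ↦ x - H x) (ball (jetAt n m ℓ Φ u) ρ) := by
  simp only [← jetAt_zero, ← jetProj_jetAt (Nat.zero_le ℓ)]
  exact ⟨fun ⟨hproj, hfst, hmap, hid⟩ ↦ ⟨hproj, hfst, hmap, hid⟩,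
    fun ⟨hproj, hfst, hmap, hid⟩ ↦ ⟨hproj, hfst, hmap, hid⟩⟩

theorem IsJetHolonomy.dist_fst_map_le (hHG : IsJetHolonomy h F U ρ κ u u' H G) {x : Jet n m ℓ}
    (hx : x ∈ ball (F u) ρ) :
    dist (G (jetProj h x)).1 u' ≤ (1 + κ) * dist (jetProj h x) (jetProj h (F u)) := by
  have hG := lipschitzOnWith_of_id_sub <|
    lipschitzOnWith_id_sub_of_jetProj_semiconj h hHG.jetProj_map hHG.lipschitzOnWith_id_sub
  have hproj : jetProj h x ∈ ball (jetProj h (F u)) ρ := by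
    simpa using (lipschitzWith_jetProj h).mapsTo_ball one_ne_zero (F u) ρ hx
  rw [← hHG.fst_map_self]
  exact (le_max_left _ _).trans
    (hG.dist_le_mul _ hproj _ (mem_ball_self (pos_of_mem_ball hx)))

theorem IsJetHolonomy.norm_increment_sub_le (hHG : IsJetHolonomy h F U ρ κ u u' H G) {v : Euc n}
    (hu : u ∈ U) (hv : v ∈ U) (hvu : F v ∈ ball (F u) ρ) :
    ‖(F (G (jetProj h (F v))).1 - F u') - (F v - F u)‖ ≤ κ * ‖F v - F u‖ := by
  have hself : F u ∈ ball (F u) ρ := mem_ball_self (pos_of_mem_ball hvu)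
  have hHu : H (F u) = F u' := by rw [hHG.map_eq u hu hself, hHG.fst_map_self]
  rw [← hHG.map_eq v hv hvu, ← hHu]
  exact norm_map_sub_map_sub_sub_le_of_lipschitzOnWith_id_sub hHG.lipschitzOnWith_id_sub hself hvu

theorem hasTransportableIncrementsOn_of_isJetHolonomy {s : Set (Euc n)} {C : ℝ≥0} (hsU : s ⊆ U)
    (hlip : LipschitzOnWith C (fun u ↦ jetProj h (F u)) s)
    (hs : ∀ u ∈ s, ∀ v ∈ s, F v ∈ ball (F u) ρ)
    (hhol : ∀ u ∈ U, ∀ u' ∈ U, ∃ H G, IsJetHolonomy h F U ρ κ u u' H G) :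
    HasTransportableIncrementsOn F s ((1 + κ) * C) κ := by
  intro u hu v hv u' hu'
  obtain ⟨H, G, hHG⟩ := hhol u (hsU hu) u' (hsU hu')
  refine ⟨(G (jetProj h (F v))).1, ?_,
    hHG.norm_increment_sub_le (hsU hu) (hsU hv) (hs u hu v hv)⟩
  calc dist (G (jetProj h (F v))).1 u'
      ≤ (1 + κ) * dist (jetProj h (F v)) (jetProj h (F u)) := hHG.dist_fst_map_le (hs u hu v hv)
    _ ≤ (1 + κ) * (C * dist v u) := by gcongr; exact hlip.dist_le_mul v hv u hu
    _ = ((1 + κ) * C : ℝ≥0) * dist v u := by push_cast; ring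

theorem jet_locally_lipschitz_general (hU : IsOpen U) (hcont : ContinuousOn F U)
    (hlip : LocallyLipschitzOn U (fun u ↦ jetProj h (F u))) (hρ : 0 < ρ) (hκ : κ < 1)
    (hhol : ∀ u ∈ U, ∀ u' ∈ U, ∃ H G, IsJetHolonomy h F U ρ κ u u' H G) :
    LocallyLipschitzOn U F := by
  intro p hp
  obtain ⟨C, t, ht, hC⟩ := hlip hp
  have hF : ContinuousAt F p := hcont.continuousAt (hU.mem_nhds hp)
  set s := F ⁻¹' ball (F p) (ρ / 2) ∩ (U ∩ t)
  have hs : s ∈ 𝓝 p := Filter.inter_mem (hF.preimage_mem_nhds (ball_mem_nhds _ (half_pos hρ)))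
    (Filter.inter_mem (hU.mem_nhds hp) (hU.nhdsWithin_eq hp ▸ ht))
  have hclose : ∀ u ∈ s, ∀ v ∈ s, F v ∈ ball (F u) ρ := fun u hu v hv ↦
    (dist_triangle_right _ _ (F p)).trans_lt (by linarith [mem_ball.1 hu.1, mem_ball.1 hv.1])
  have hbdd : Bornology.IsBounded (F '' s) :=
    isBounded_ball.subset (image_subset_iff.2 inter_subset_left)
  have htransport := hasTransportableIncrementsOn_of_isJetHolonomy (fun _ hu ↦ hu.2.1)
    (hC.mono fun _ hu ↦ hu.2.2) hclose hhol
  obtain ⟨K, t', ht', hK⟩ := htransport.exists_lipschitzOnWith hκ hs hbdd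
  exact ⟨K, t', mem_nhdsWithin_of_mem_nhds ht', hK⟩

end Holonomy

/-- **Lipschitz propagation of jets.**  Suppose `Φ : U → ℝ^m` is `C^ℓ` on an open ball
`U ⊆ ℝ^n`, its graph map is `C`-Lipschitz, its jet map is continuous and bounded on `U`,
and for every pair `(u, u') ∈ U × U` there is a jet-space homeomorphism `H_z^ℓ` on the
`ρ`-ball around `j_u^ℓ Φ` covering a map `H_z^0` of `0`-jets, preserving the jet
prolongation of `Φ`, moving `u` to `u'`, and with `Lip(Id − H_z^ℓ) ≤ 1/2`.  Then
`u ↦ j_u^ℓ Φ` is locally Lipschitz on `U`. -/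
theorem jet_locally_lipschitz (n m ℓ : ℕ) (hn : 1 ≤ n) (hm : 1 ≤ m)
    (U : Set (Euc n)) (c : Euc n) (r : ℝ) (hr : 0 < r) (hU : U = Metric.ball c r)
    (Φ : Euc n → Euc m) (hΦ : ContDiffOn ℝ ℓ Φ U)
    (C : ℝ) (hC : 0 < C)
    (hlip : ∀ u ∈ U, ∀ u' ∈ U,
      ‖((u, Φ u) : Euc n × Euc m) - (u', Φ u')‖ ≤ C * ‖u - u'‖)
    (hcont : ContinuousOn (jetAt n m ℓ Φ) U)
    (hbdd : ∃ M : ℝ, ∀ u ∈ U, ‖jetAt n m ℓ Φ u‖ ≤ M)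
    (ρ : ℝ) (hρ : 0 < ρ)
    (hhol : ∀ u ∈ U, ∀ u' ∈ U,
      ∃ (Hl : Jet n m ℓ → Jet n m ℓ) (H0 : Jet n m 0 → Jet n m 0),
        -- `π_{ℓ,0} ∘ H_z^ℓ = H_z^0 ∘ π_{ℓ,0}` on the ball
        (∀ x ∈ Metric.ball (jetAt n m ℓ Φ u) ρ,
          jetProj (Nat.zero_le ℓ) (Hl x) = H0 (jetProj (Nat.zero_le ℓ) x)) ∧
        -- `h_z(u, Φ(u)) = u'`
        (H0 (jet0mk n m u (Φ u))).1 = u' ∧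
        -- `H_z^ℓ` preserves the jet prolongation of `Φ`
        (∀ v ∈ U, jetAt n m ℓ Φ v ∈ Metric.ball (jetAt n m ℓ Φ u) ρ →
          Hl (jetAt n m ℓ Φ v) = jetAt n m ℓ Φ ((H0 (jet0mk n m v (Φ v))).1)) ∧
        -- `Lip(Id − H_z^ℓ) ≤ 1/2` on the ball
        LipschitzOnWith (1 / 2 : NNReal) (fun x => x - Hl x)
          (Metric.ball (jetAt n m ℓ Φ u) ρ)) :
    ∀ u ∈ U, ∃ ε > 0, ∃ K : NNReal,
      LipschitzOnWith K (jetAt n m ℓ Φ) (Metric.ball u ε ∩ U) := by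
  have hgraph : LipschitzOnWith C.toNNReal (fun u ↦ (u, Φ u)) U :=
    .of_dist_le' fun u hu u' hu' ↦ by simpa only [dist_eq_norm] using hlip u hu u' hu'
  have hjet : LocallyLipschitzOn U (jetAt n m ℓ Φ) :=
    jet_locally_lipschitz_general (hU ▸ isOpen_ball) hcont
      (fun _ _ ↦ ⟨_, U, self_mem_nhdsWithin, lipschitzOnWith_jetProj_jetAt hgraph⟩) hρ
      (NNReal.half_lt_self one_ne_zero) (by simpa only [isJetHolonomy_jetAt_iff] using hhol)
  exact fun u hu ↦ exists_lipschitzOnWith_ball_inter hjet hu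
end
end

section
/- Fix an integer ℓ ≥ 1. For each B ≥ 1 there exist θ₀ = θ₀(B) > 0 and C₀ = C₀(B) > 0 with the following property. Suppose the points {z_{j,k} ∈ ℝ² : 0 ≤ j ≤ ℓ, 0 ≤ k ≤ ℓ}, {x_j ∈ ℝ : 0 ≤ j ≤ ℓ} and {y_k ∈ ℝ : 0 ≤ k ≤ ℓ} satisfy R/η < B and |z_{j,k} − (x_j, y_k)| ≤ θ₀ η for all j, k, where R = max_{j,k} |z_{j,k}| and η = min_{(j,k) ≠ (j',k')} |z_{j,k} − z_{j',k'}|. Then for any values {b_{j,k} ∈ ℝ : 0 ≤ j, k ≤ ℓ} there exists a unique polynomial ℘(x, y) = Σ_{0 ≤ p, q ≤ ℓ} c_{pq} x^p y^q with ℘(z_{j,k}) = b_{j,k} for all 0 ≤ j, k ≤ ℓ; moreover Σ_{p,q} |c_{pq}| R^{p+q} ≤ C₀ max_{j,k} |b_{j,k}|. -/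
open Finset

/-!
On an exact grid `(x_j, y_k)` with distinct nodes, evaluation of polynomials of bidegree `≤ (m, n)`
is injective: apply the Vandermonde argument in each variable. Dividing all points by `η`, the
nodes stay in a ball of radius `B + 1` and remain separated by `1 / 2`, so the exact grids in
question form a compact set. By compactness evaluation is bounded below uniformly on a neighbourhood
of this set, which gives unique solvability and a bound on the coefficients `η ^ (p + q) * c_{pq}`;
finally `R ≤ B * η`.
-/

section UniformLowerBound

variable {X Y : Type*} [PseudoMetricSpace X]

theorem exists_pos_le_on_thickening_prod [TopologicalSpace Y] {f : X × Y → ℝ}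
    (hf : Continuous f) {K : Set X} {S : Set Y} (hK : IsCompact K) (hS : IsCompact S)
    (hpos : ∀ a ∈ K ×ˢ S, 0 < f a) :
    ∃ δ > 0, ∃ μ > 0, ∀ x ∈ Metric.thickening δ K, ∀ y ∈ S, μ ≤ f (x, y) := by
  obtain ⟨μ, hμ, hle⟩ := (hK.prod hS).exists_forall_le' hf.continuousOn hpos
  have hsub : K ×ˢ S ⊆ {a | μ / 2 < f a} := fun a ha => (half_lt_self hμ).trans_le (hle a ha)
  obtain ⟨U, V, hU, -, hKU, hSV, hUV⟩ :=
    generalized_tube_lemma hK hS (isOpen_lt continuous_const hf) hsub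
  obtain ⟨δ, hδ, hδU⟩ := hK.exists_thickening_subset_open hU hKU
  exact ⟨δ, hδ, μ / 2, half_pos hμ, fun x hx y hy => (hUV ⟨hδU hx, hSV hy⟩).le⟩

variable {𝕜 E F : Type*} [RCLike 𝕜] [NormedAddCommGroup E] [NormedSpace 𝕜 E]
  [NormedAddCommGroup F] [NormedSpace 𝕜 F]

theorem mul_norm_le_norm_map_of_sphere {L : E →ₗ[𝕜] F} {μ : ℝ}
    (h : ∀ v ∈ Metric.sphere (0 : E) 1, μ ≤ ‖L v‖) (v : E) : μ * ‖v‖ ≤ ‖L v‖ := by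
  rcases eq_or_ne v 0 with rfl | hv
  · simp
  have hunit := h (((‖v‖⁻¹ : ℝ) : 𝕜) • v) (by simp [norm_smul, hv])
  rw [map_smul, norm_smul, RCLike.norm_ofReal, abs_inv, abs_norm, inv_mul_eq_div,
    le_div_iff₀ (norm_pos_iff.2 hv)] at hunit
  exact hunit

theorem exists_pos_mul_norm_le_on_thickening [ProperSpace E] {L : X → E →ₗ[𝕜] F}
    (hL : Continuous fun a : X × E => L a.1 a.2) {K : Set X} (hK : IsCompact K)
    (hinj : ∀ x ∈ K, Function.Injective (L x)) :
    ∃ δ > 0, ∃ μ > 0, ∀ x ∈ Metric.thickening δ K, ∀ v, μ * ‖v‖ ≤ ‖L x v‖ := by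
  have hpos : ∀ a ∈ K ×ˢ Metric.sphere (0 : E) 1, 0 < ‖L a.1 a.2‖ := by
    rintro ⟨x, v⟩ ⟨hx, hv⟩
    rw [norm_pos_iff, map_ne_zero_iff _ (hinj x hx)]
    exact ne_zero_of_mem_unit_sphere ⟨v, hv⟩
  obtain ⟨δ, hδ, μ, hμ, hle⟩ :=
    exists_pos_le_on_thickening_prod hL.norm hK (isCompact_sphere 0 1) hpos
  exact ⟨δ, hδ, μ, hμ, fun x hx => mul_norm_le_norm_map_of_sphere (hle x hx)⟩

end UniformLowerBound

section SeparatedNodes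

variable {ι V W : Type*} [SeminormedAddCommGroup V] [SeminormedAddCommGroup W] {r ε δ : ℝ}

/-- The families of nodes of norm at most `r` whose members with distinct indices are at distance
at least `ε`; for `0 < ε` and proper `V`, a compact set of injective families. -/
def separatedNodes (ι V : Type*) [SeminormedAddCommGroup V] (r ε : ℝ) : Set (ι → V) :=
  {x | (∀ i, ‖x i‖ ≤ r) ∧ Pairwise fun i j => ε ≤ ‖x i - x j‖}

theorem isCompact_separatedNodes [ProperSpace V] : IsCompact (separatedNodes ι V r ε) := by
  have hball : separatedNodes ι V r ε = Set.univ.pi (fun _ => Metric.closedBall 0 r) ∩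
      {x | Pairwise fun i j => ε ≤ ‖x i - x j‖} := by
    ext x
    simp [separatedNodes]
  rw [hball]
  refine (isCompact_univ_pi fun _ => isCompact_closedBall 0 r).inter_right ?_
  simp only [Pairwise, Set.ofPred_forall]
  exact isClosed_iInter fun i => isClosed_iInter fun j => isClosed_iInter fun _ =>
    isClosed_le (by fun_prop) (by fun_prop)

theorem separatedNodes_mono {r' ε' : ℝ} (hr : r ≤ r') (hε : ε' ≤ ε) :
    separatedNodes ι V r ε ⊆ separatedNodes ι V r' ε' :=
  fun _ hx => ⟨fun i => (hx.1 i).trans hr, fun _ _ hij => hε.trans (hx.2 hij)⟩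

theorem injective_of_mem_separatedNodes {x : ι → V} (hε : 0 < ε)
    (hx : x ∈ separatedNodes ι V r ε) : Function.Injective x := by
  intro i j hij
  by_contra hne
  have hsep : ε ≤ ‖x i - x j‖ := hx.2 hne
  rw [hij, sub_self, norm_zero] at hsep
  exact hε.not_ge hsep

theorem mem_separatedNodes_of_norm_sub_le {u v : ι → V} (hu : u ∈ separatedNodes ι V r ε)
    (huv : ∀ i, ‖u i - v i‖ ≤ δ) : v ∈ separatedNodes ι V (r + δ) (ε - 2 * δ) := by
  refine ⟨fun i => ?_, fun i j hij => ?_⟩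
  · linarith [norm_sub_norm_le (v i) (u i), norm_sub_rev (v i) (u i), hu.1 i, huv i]
  · have hdiff : ‖u i - u j‖ ≤ ‖u i - v i‖ + ‖v i - v j‖ + ‖u j - v j‖ := by
      simpa only [dist_eq_norm, norm_sub_rev (v j) (u j)] using
        dist_triangle4 (u i) (v i) (v j) (u j)
    linarith [hu.2 hij, huv i, huv j]

theorem mem_separatedNodes_of_prodMk_right {x : ι → V} {b : W}
    (h : (fun i => (x i, b)) ∈ separatedNodes ι (V × W) r ε) : x ∈ separatedNodes ι V r ε :=
  ⟨fun i => (norm_fst_le (x i, b)).trans (h.1 i), fun i j hij => by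
    simpa [Prod.norm_def] using h.2 hij⟩

theorem mem_separatedNodes_of_prodMk_left {y : ι → W} {a : V}
    (h : (fun i => (a, y i)) ∈ separatedNodes ι (V × W) r ε) : y ∈ separatedNodes ι W r ε :=
  ⟨fun i => (norm_snd_le (a, y i)).trans (h.1 i), fun i j hij => by
    simpa [Prod.norm_def] using h.2 hij⟩

theorem mem_separatedNodes_of_near_rectangle {κ : Type*} [Nonempty ι] [Nonempty κ]
    {z : ι → κ → V × W} {x : ι → V} {y : κ → W} (hz : ∀ j k, ‖z j k‖ ≤ r)
    (hsep : ∀ j k j' k', (j, k) ≠ (j', k') → ε ≤ ‖z j k - z j' k'‖)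
    (hxy : ∀ j k, ‖z j k - (x j, y k)‖ ≤ δ) :
    x ∈ separatedNodes ι V (r + δ) (ε - 2 * δ) ∧ y ∈ separatedNodes κ W (r + δ) (ε - 2 * δ) := by
  inhabit ι
  inhabit κ
  have hrow : (fun j => z j default) ∈ separatedNodes ι (V × W) r ε :=
    ⟨fun j => hz j default, fun j j' hne => hsep _ _ _ _ (by simp [hne])⟩
  have hcol : (fun k => z default k) ∈ separatedNodes κ (V × W) r ε :=
    ⟨fun k => hz default k, fun k k' hne => hsep _ _ _ _ (by simp [hne])⟩
  exact ⟨mem_separatedNodes_of_prodMk_right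
      (mem_separatedNodes_of_norm_sub_le hrow fun j => hxy j default),
    mem_separatedNodes_of_prodMk_left
      (mem_separatedNodes_of_norm_sub_le hcol fun k => hxy default k)⟩

end SeparatedNodes

section GridEval

variable {ι κ : Type*} {m n : ℕ}

/-- The exact rectangular grid with abscissae `x` and ordinates `y`. -/
def rectGrid {S : Type*} (x : ι → S) (y : κ → S) : ι → κ → S × S :=
  fun j k => (x j, y k)

/-- The linear map sending the coefficients `c` of a polynomial of degree `< m` in the first and
`< n` in the second variable to its values at the points `z j k`. -/
def gridEval {S : Type*} [CommSemiring S] (z : ι → κ → S × S) :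
    (Fin m → Fin n → S) →ₗ[S] (ι → κ → S) where
  toFun c j k := ∑ p, ∑ q, c p q * (z j k).1 ^ (p : ℕ) * (z j k).2 ^ (q : ℕ)
  map_add' c d := by
    ext j k
    simp only [Pi.add_apply, add_mul, sum_add_distrib]
  map_smul' s c := by
    ext j k
    simp only [Pi.smul_apply, smul_eq_mul, mul_sum, mul_assoc, RingHom.id_apply]

theorem gridEval_apply {S : Type*} [CommSemiring S] (z : ι → κ → S × S) (c : Fin m → Fin n → S)
    (j : ι) (k : κ) :
    gridEval z c j k = ∑ p, ∑ q, c p q * (z j k).1 ^ (p : ℕ) * (z j k).2 ^ (q : ℕ) :=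
  rfl

theorem gridEval_rectGrid_injective {S : Type*} [CommRing S] [IsDomain S]
    {x : Fin m → S} {y : Fin n → S} (hx : Function.Injective x) (hy : Function.Injective y) :
    Function.Injective (gridEval (m := m) (n := n) (rectGrid x y)) := by
  refine (injective_iff_map_eq_zero _).2 fun c hc => ?_
  have hrow (k : Fin n) : (fun p => ∑ q : Fin n, y k ^ (q : ℕ) * c p q) = 0 := by
    refine Matrix.eq_zero_of_forall_index_sum_pow_mul_eq_zero hx fun j => ?_
    rw [← show gridEval (rectGrid x y) c j k = 0 by rw [hc]; rfl, gridEval_apply]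
    simp only [rectGrid, mul_sum]
    exact sum_congr rfl fun p _ => sum_congr rfl fun q _ => by ring
  funext p
  exact Matrix.eq_zero_of_forall_index_sum_pow_mul_eq_zero hy fun k => congrFun (hrow k) p

theorem existsUnique_gridEval_eq {K : Type*} [Field K] {z : Fin m → Fin n → K × K}
    (hz : Function.Injective (gridEval (m := m) (n := n) z)) (b : Fin m → Fin n → K) :
    ∃! c : Fin m → Fin n → K, gridEval z c = b :=
  (show Function.Bijective (gridEval z) from
    ⟨hz, LinearMap.injective_iff_surjective.1 hz⟩).existsUnique b

/-- The coefficients of `P (t * X, t * Y)`, where `c` are the coefficients of `P`; this is how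
coefficients change when the points are rescaled by `t`. -/
def dilateCoeff {S : Type*} [CommSemiring S] (t : S) (c : Fin m → Fin n → S) : Fin m → Fin n → S :=
  fun p q => t ^ ((p : ℕ) + (q : ℕ)) * c p q

theorem gridEval_smul {S : Type*} [CommSemiring S] (t : S) (z : ι → κ → S × S)
    (c : Fin m → Fin n → S) : gridEval (t • z) c = gridEval z (dilateCoeff t c) := by
  ext j k
  simp only [gridEval_apply, dilateCoeff, Pi.smul_apply, Prod.smul_fst, Prod.smul_snd, smul_eq_mul]
  exact sum_congr rfl fun p _ => sum_congr rfl fun q _ => by ring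

theorem dilateCoeff_injective {K : Type*} [Field K] {t : K} (ht : t ≠ 0) :
    Function.Injective (dilateCoeff (m := m) (n := n) t) := fun c d h => by
  ext p q
  exact mul_left_cancel₀ (pow_ne_zero _ ht) (congrFun (congrFun h p) q)

theorem injective_gridEval_of_mul_norm_dilateCoeff_le {K : Type*} [NormedField K]
    [Fintype ι] [Fintype κ] {z : ι → κ → K × K} {μ : ℝ} {t : K} (hμ : 0 < μ) (ht : t ≠ 0)
    (h : ∀ c : Fin m → Fin n → K, μ * ‖dilateCoeff t c‖ ≤ ‖gridEval z c‖) :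
    Function.Injective (gridEval (m := m) (n := n) z) := by
  refine (injective_iff_map_eq_zero _).2 fun c hc => dilateCoeff_injective ht ?_
  have hle := h c
  rw [hc, norm_zero] at hle
  have hzero : dilateCoeff t c = 0 := norm_le_zero_iff.1 (nonpos_of_mul_nonpos_right hle hμ)
  rw [hzero]
  ext p q
  simp [dilateCoeff]

theorem continuous_rectGrid {S : Type*} [TopologicalSpace S] :
    Continuous fun a : (ι → S) × (κ → S) => rectGrid a.1 a.2 := by
  unfold rectGrid
  fun_prop

theorem continuous_gridEval {S : Type*} [CommSemiring S] [TopologicalSpace S]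
    [IsTopologicalSemiring S] :
    Continuous fun a : (ι → κ → S × S) × (Fin m → Fin n → S) => gridEval a.1 a.2 := by
  simp only [continuous_pi_iff, gridEval_apply]
  fun_prop

end GridEval

section ApproximateGrid

variable {𝕜 : Type*} [RCLike 𝕜]

theorem norm_dilateCoeff_apply {m n : ℕ} {t : ℝ} (ht : 0 ≤ t) (c : Fin m → Fin n → 𝕜) (p : Fin m)
    (q : Fin n) : ‖dilateCoeff (t : 𝕜) c p q‖ = t ^ ((p : ℕ) + (q : ℕ)) * ‖c p q‖ := by
  rw [dilateCoeff, norm_mul, norm_pow, RCLike.norm_of_nonneg ht]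

theorem sum_norm_mul_pow_le_mul_norm_dilateCoeff {m n : ℕ} {B R η : ℝ} (hB : 0 ≤ B) (hR : 0 ≤ R)
    (hη : 0 ≤ η) (hRB : R ≤ B * η) (c : Fin m → Fin n → 𝕜) :
    ∑ p, ∑ q, ‖c p q‖ * R ^ ((p : ℕ) + (q : ℕ)) ≤
      (∑ p : Fin m, ∑ q : Fin n, B ^ ((p : ℕ) + (q : ℕ))) * ‖dilateCoeff (η : 𝕜) c‖ := by
  simp only [sum_mul]
  refine sum_le_sum fun p _ => sum_le_sum fun q _ => ?_
  calc ‖c p q‖ * R ^ ((p : ℕ) + (q : ℕ))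
      ≤ ‖c p q‖ * (B * η) ^ ((p : ℕ) + (q : ℕ)) := by gcongr
    _ = B ^ ((p : ℕ) + (q : ℕ)) * ‖dilateCoeff (η : 𝕜) c p q‖ := by
        rw [norm_dilateCoeff_apply hη]
        ring
    _ ≤ B ^ ((p : ℕ) + (q : ℕ)) * ‖dilateCoeff (η : 𝕜) c‖ := by
        gcongr
        exact (norm_le_pi_norm _ q).trans (norm_le_pi_norm (dilateCoeff (η : 𝕜) c) p)

theorem exists_pos_mul_norm_le_gridEval_near_separatedNodes (m n : ℕ) (r : ℝ) {ε : ℝ}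
    (hε : 0 < ε) :
    ∃ δ > 0, ∃ μ > 0, ∀ z : Fin m → Fin n → 𝕜 × 𝕜, ∀ x ∈ separatedNodes (Fin m) 𝕜 r ε,
      ∀ y ∈ separatedNodes (Fin n) 𝕜 r ε, ‖z - rectGrid x y‖ < δ →
        ∀ c : Fin m → Fin n → 𝕜, μ * ‖c‖ ≤ ‖gridEval z c‖ := by
  let grids : Set (Fin m → Fin n → 𝕜 × 𝕜) := (fun a => rectGrid a.1 a.2) ''
    (separatedNodes (Fin m) 𝕜 r ε ×ˢ separatedNodes (Fin n) 𝕜 r ε)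
  have hcompact : IsCompact grids :=
    (isCompact_separatedNodes.prod isCompact_separatedNodes).image continuous_rectGrid
  have hinj : ∀ w ∈ grids, Function.Injective (gridEval (m := m) (n := n) w) := by
    rintro _ ⟨⟨x, y⟩, ⟨hx, hy⟩, rfl⟩
    exact gridEval_rectGrid_injective (injective_of_mem_separatedNodes hε hx)
      (injective_of_mem_separatedNodes hε hy)
  have hcont : Continuous fun a : (Fin m → Fin n → 𝕜 × 𝕜) × (Fin m → Fin n → 𝕜) =>
      gridEval a.1 a.2 := continuous_gridEval
  obtain ⟨δ, hδ, μ, hμ, hle⟩ := exists_pos_mul_norm_le_on_thickening hcont hcompact hinj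
  refine ⟨δ, hδ, μ, hμ, fun z x hx y hy hz => hle z ?_⟩
  exact Metric.mem_thickening_iff.2
    ⟨rectGrid x y, ⟨(x, y), ⟨hx, hy⟩, rfl⟩, by rwa [dist_eq_norm]⟩

theorem exists_pos_mul_norm_le_gridEval (𝕜 : Type*) [RCLike 𝕜] (m n : ℕ) (B : ℝ) :
    ∃ θ > 0, ∃ μ > 0, ∀ (z : Fin (m + 1) → Fin (n + 1) → 𝕜 × 𝕜) (x : Fin (m + 1) → 𝕜)
      (y : Fin (n + 1) → 𝕜), (∀ j k, ‖z j k‖ ≤ B) →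
      (∀ j k j' k', (j, k) ≠ (j', k') → 1 ≤ ‖z j k - z j' k'‖) →
      (∀ j k, ‖z j k - (x j, y k)‖ ≤ θ) →
        ∀ c : Fin (m + 1) → Fin (n + 1) → 𝕜, μ * ‖c‖ ≤ ‖gridEval z c‖ := by
  obtain ⟨δ, hδ, μ, hμ, hle⟩ := exists_pos_mul_norm_le_gridEval_near_separatedNodes (𝕜 := 𝕜)
    (m + 1) (n + 1) (B + 1) one_half_pos
  obtain ⟨θ, hθ, hθδ, hθ_le⟩ : ∃ θ > 0, θ < δ ∧ θ ≤ 1 / 4 :=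
    ⟨min (δ / 2) (1 / 4), by positivity, (min_le_left _ _).trans_lt (half_lt_self hδ),
      min_le_right _ _⟩
  refine ⟨θ, hθ, μ, hμ, fun z x y hz hsep hxy => ?_⟩
  obtain ⟨hx, hy⟩ := mem_separatedNodes_of_near_rectangle hz hsep hxy
  have hmono {d : ℕ} :
      separatedNodes (Fin d) 𝕜 (B + θ) (1 - 2 * θ) ⊆ separatedNodes (Fin d) 𝕜 (B + 1) (1 / 2) :=
    separatedNodes_mono (by linarith) (by linarith)
  refine hle z x (hmono hx) y (hmono hy) ?_
  exact (pi_norm_lt_iff hδ).2 fun j => (pi_norm_lt_iff hδ).2 fun k => (hxy j k).trans_lt hθδ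

theorem exists_pos_mul_norm_dilateCoeff_le_gridEval (𝕜 : Type*) [RCLike 𝕜] (m n : ℕ) (B : ℝ) :
    ∃ θ > 0, ∃ μ > 0, ∀ (z : Fin (m + 1) → Fin (n + 1) → 𝕜 × 𝕜) (x : Fin (m + 1) → 𝕜)
      (y : Fin (n + 1) → 𝕜) (η : ℝ), 0 < η → (∀ j k, ‖z j k‖ ≤ B * η) →
      (∀ j k j' k', (j, k) ≠ (j', k') → η ≤ ‖z j k - z j' k'‖) →
      (∀ j k, ‖z j k - (x j, y k)‖ ≤ θ * η) →
        ∀ c : Fin (m + 1) → Fin (n + 1) → 𝕜, μ * ‖dilateCoeff (η : 𝕜) c‖ ≤ ‖gridEval z c‖ := by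
  obtain ⟨θ, hθ, μ, hμ, hle⟩ := exists_pos_mul_norm_le_gridEval 𝕜 m n B
  refine ⟨θ, hθ, μ, hμ, fun z x y η hη hz hsep hxy c => ?_⟩
  have hη𝕜 : (η : 𝕜) ≠ 0 := RCLike.ofReal_ne_zero.2 hη.ne'
  have hnorm (v : 𝕜 × 𝕜) : ‖(η : 𝕜)⁻¹ • v‖ = ‖v‖ / η := by
    rw [norm_smul, norm_inv, RCLike.norm_of_nonneg hη.le, inv_mul_eq_div]
  have hscale : gridEval z c = gridEval ((η : 𝕜)⁻¹ • z) (dilateCoeff (η : 𝕜) c) := by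
    rw [← gridEval_smul, smul_inv_smul₀ hη𝕜]
  rw [hscale]
  refine hle _ ((η : 𝕜)⁻¹ • x) ((η : 𝕜)⁻¹ • y) (fun j k => ?_) (fun j k j' k' hne => ?_)
    (fun j k => ?_) _
  · rw [Pi.smul_apply, Pi.smul_apply, hnorm, div_le_iff₀ hη]
    exact hz j k
  · simp only [Pi.smul_apply]
    rw [← smul_sub, hnorm, one_le_div hη]
    exact hsep j k j' k' hne
  · simp only [Pi.smul_apply]
    rw [← Prod.smul_mk, ← smul_sub, hnorm, div_le_iff₀ hη]
    exact hxy j k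

end ApproximateGrid

theorem rectangle_interpolation_general (𝕜 : Type*) [RCLike 𝕜] (m n : ℕ) {B : ℝ} (hB : 0 < B) :
    ∃ θ₀ > (0 : ℝ), ∃ C₀ > (0 : ℝ),
      ∀ (z : Fin (m + 1) → Fin (n + 1) → 𝕜 × 𝕜)
        (x : Fin (m + 1) → 𝕜) (y : Fin (n + 1) → 𝕜) (R η : ℝ),
        0 < η →
        (∀ j k, ‖z j k‖ ≤ R) →
        (∀ j k j' k', (j, k) ≠ (j', k') → η ≤ ‖z j k - z j' k'‖) →
        R / η < B →
        (∀ j k, ‖z j k - (x j, y k)‖ ≤ θ₀ * η) →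
        ∀ b : Fin (m + 1) → Fin (n + 1) → 𝕜,
          (∃! c : Fin (m + 1) → Fin (n + 1) → 𝕜,
            ∀ j k, ∑ p : Fin (m + 1), ∑ q : Fin (n + 1),
              c p q * (z j k).1 ^ (p : ℕ) * (z j k).2 ^ (q : ℕ) = b j k) ∧
          (∀ c : Fin (m + 1) → Fin (n + 1) → 𝕜,
            (∀ j k, ∑ p : Fin (m + 1), ∑ q : Fin (n + 1),
              c p q * (z j k).1 ^ (p : ℕ) * (z j k).2 ^ (q : ℕ) = b j k) →
            ∀ M : ℝ, (∀ j k, ‖b j k‖ ≤ M) →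
              ∑ p : Fin (m + 1), ∑ q : Fin (n + 1),
                ‖c p q‖ * R ^ ((p : ℕ) + (q : ℕ)) ≤ C₀ * M) := by
  obtain ⟨θ, hθ, μ, hμ, hle⟩ := exists_pos_mul_norm_dilateCoeff_le_gridEval 𝕜 m n B
  let weight : ℝ := ∑ p : Fin (m + 1), ∑ q : Fin (n + 1), B ^ ((p : ℕ) + (q : ℕ))
  have hweight : 0 < weight := by positivity
  refine ⟨θ, hθ, weight / μ, by positivity, fun z x y R η hη hz hsep hRη hxy b => ?_⟩
  have hRB : R ≤ B * η := ((div_lt_iff₀ hη).1 hRη).le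
  have hlower := hle z x y η hη (fun j k => (hz j k).trans hRB) hsep hxy
  have hinj := injective_gridEval_of_mul_norm_dilateCoeff_le hμ
    (RCLike.ofReal_ne_zero.2 hη.ne') hlower
  refine ⟨by simpa only [funext_iff, gridEval_apply] using existsUnique_gridEval_eq hinj b,
    fun c hc M hM => ?_⟩
  have hM₀ : 0 ≤ M := (norm_nonneg _).trans (hM 0 0)
  have hcb : ‖gridEval z c‖ ≤ M := (pi_norm_le_iff_of_nonneg hM₀).2 fun j =>
    (pi_norm_le_iff_of_nonneg hM₀).2 fun k => by simpa only [gridEval_apply, hc] using hM j k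
  calc ∑ p, ∑ q, ‖c p q‖ * R ^ ((p : ℕ) + (q : ℕ))
      ≤ weight * ‖dilateCoeff (η : 𝕜) c‖ := sum_norm_mul_pow_le_mul_norm_dilateCoeff hB.le
        ((norm_nonneg _).trans (hz 0 0)) hη.le hRB c
    _ ≤ weight * (M / μ) := by
        gcongr
        exact (le_div_iff₀' hμ).2 ((hlower c).trans hcb)
    _ = weight / μ * M := by ring

/-- **Rectangle interpolation lemma (Lemma 8.7).**  If the points `z_{j,k} ∈ ℝ²`
(`0 ≤ j, k ≤ ℓ`) form an approximate rectangular grid — `R/η < B` and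
`|z_{j,k} − (x_j, y_k)| ≤ θ₀ η` — then any values `b_{j,k}` are interpolated by a unique
polynomial `Σ_{p,q} c_{pq} x^p y^q` of bidegree `≤ ℓ`, whose coefficients satisfy
`Σ_{p,q} |c_{pq}| R^{p+q} ≤ C₀ · max_{j,k} |b_{j,k}|`, with `θ₀` and `C₀` depending only
on `B` (and `ℓ`). -/
theorem rectangle_interpolation (ℓ : ℕ) (hℓ : 1 ≤ ℓ) :
    ∀ B : ℝ, 1 ≤ B → ∃ θ₀ > (0 : ℝ), ∃ C₀ > (0 : ℝ),
      ∀ (z : Fin (ℓ + 1) → Fin (ℓ + 1) → ℝ × ℝ)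
        (x y : Fin (ℓ + 1) → ℝ) (R η : ℝ),
        0 < η →
        (∀ j k, ‖z j k‖ ≤ R) →
        (∀ j k j' k', (j, k) ≠ (j', k') → η ≤ ‖z j k - z j' k'‖) →
        R / η < B →
        (∀ j k, ‖z j k - (x j, y k)‖ ≤ θ₀ * η) →
        ∀ b : Fin (ℓ + 1) → Fin (ℓ + 1) → ℝ,
          (∃! c : Fin (ℓ + 1) → Fin (ℓ + 1) → ℝ,
            ∀ j k, ∑ p : Fin (ℓ + 1), ∑ q : Fin (ℓ + 1),
              c p q * (z j k).1 ^ (p : ℕ) * (z j k).2 ^ (q : ℕ) = b j k) ∧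
          (∀ c : Fin (ℓ + 1) → Fin (ℓ + 1) → ℝ,
            (∀ j k, ∑ p : Fin (ℓ + 1), ∑ q : Fin (ℓ + 1),
              c p q * (z j k).1 ^ (p : ℕ) * (z j k).2 ^ (q : ℕ) = b j k) →
            ∀ M : ℝ, (∀ j k, |b j k| ≤ M) →
              ∑ p : Fin (ℓ + 1), ∑ q : Fin (ℓ + 1),
                |c p q| * R ^ ((p : ℕ) + (q : ℕ)) ≤ C₀ * M) := by
  exact fun B hB => rectangle_interpolation_general ℝ ℓ ℓ (one_pos.trans_le hB)
end
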